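/- Let N = 9. Then the pull-in voltage of (P)_λ on the unit ball satisfies λ* ≤ 366. -/

import Mathlib

open MeasureTheory Metric Set Filter

/-- The Laplacian of `u : ℝ^N → ℝ`, as the sum of pure second partial derivatives. -/
noncomputable def lap {N : ℕ} (u : EuclideanSpace ℝ (Fin N) → ℝ) (x : EuclideanSpace ℝ (Fin N)) : ℝ :=
  ∑ i : Fin N, fderiv ℝ (fun y => fderiv ℝ u y (EuclideanSpace.single i 1)) x
    (EuclideanSpace.single i 1)

/-- The biharmonic operator `Δ²`. -/
noncomputable def biharm {N : ℕ} (u : EuclideanSpace ℝ (Fin N) → ℝ)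
    (x : EuclideanSpace ℝ (Fin N)) : ℝ :=
  lap (lap u) x

/-- A classical solution of `(P)_λ` on the unit ball `B ⊆ ℝ^N`:
`u ∈ C⁴(B̄)`, `0 < u < 1` in `B`, `Δ²u = λ (1-u)⁻²` in `B`, and `u = 0`, `∂_ν u = 0` on `∂B`. -/
structure IsClassicalSolution (N : ℕ) (lam : ℝ) (u : EuclideanSpace ℝ (Fin N) → ℝ) : Prop where
  contDiffOn : ContDiffOn ℝ 4 u (closedBall (0 : EuclideanSpace ℝ (Fin N)) 1)
  pos : ∀ x ∈ ball (0 : EuclideanSpace ℝ (Fin N)) 1, 0 < u x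
  lt_one : ∀ x ∈ ball (0 : EuclideanSpace ℝ (Fin N)) 1, u x < 1
  eqn : ∀ x ∈ ball (0 : EuclideanSpace ℝ (Fin N)) 1, biharm u x = lam / (1 - u x) ^ 2
  bdry : ∀ x : EuclideanSpace ℝ (Fin N), ‖x‖ = 1 → u x = 0
  bdry_deriv : ∀ x : EuclideanSpace ℝ (Fin N), ‖x‖ = 1 →
    fderivWithin ℝ u (closedBall (0 : EuclideanSpace ℝ (Fin N)) 1) x x = 0

/-- The set of voltages `λ > 0` for which `(P)_λ` admits a classical solution;
the pull-in voltage `λ*` is its supremum. -/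
def solSet (N : ℕ) : Set ℝ := {lam | 0 < lam ∧ ∃ u, IsClassicalSolution N lam u}

/-- `λ̄_N = (8/9)(N - 2/3)(N - 8/3)`. -/
noncomputable def lamBar (N : ℕ) : ℝ := (8 / 9) * ((N : ℝ) - 2 / 3) * ((N : ℝ) - 8 / 3)

/-!
Let `u` solve `(P)_λ`, and let `φ ≥ 0` vanish with its gradient on the unit sphere. Integrating by
parts four times gives `∫ φ λ (1 - u)⁻² = ∫ u Δ²φ`. Since `t ↦ t⁻²` lies above its tangent line
at `1 / s`, every function `s ≥ 0` satisfies `(1 - u)⁻² ≥ 3 s² - 2 s³ (1 - u)`. If moreover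
`Δ²φ ≤ 2 Λ φ s³`, then `λ ∫ φ (3 s² - 2 s³) + 2 (λ - Λ) ∫ φ s³ u ≤ 0`, so `λ ≤ Λ` as soon as
`∫ φ (3 s² - 2 s³) > 0`.
For `φ` and `s` polynomial in `1 - ‖x‖²` both conditions on the pair concern polynomials in one
variable: `Δ` acts by a second-order operator on such functions, and the mean values over the ball
of the powers of `1 - ‖x‖²` obey a two-term recursion.
-/

open scoped Topology ContDiff

section ZeroExtension

theorem inter_frontier_nonempty_of_isPreconnected {X : Type*} [TopologicalSpace X] {s t : Set X}
    (ht : IsPreconnected t) (hs : (t ∩ s).Nonempty) (hsc : (t ∩ sᶜ).Nonempty) :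
    (t ∩ frontier s).Nonempty := by
  rw [frontier_eq_closure_inter_closure]
  exact isPreconnected_closed_iff.1 ht _ _ isClosed_closure isClosed_closure
    (fun x _ ↦ (em (x ∈ s)).imp (subset_closure ·) (subset_closure ·))
    (hs.mono <| inter_subset_inter_right t subset_closure)
    (hsc.mono <| inter_subset_inter_right t subset_closure)

theorem lipschitzWith_indicator {E F : Type*} [SeminormedAddCommGroup E] [NormedSpace ℝ E]
    [SeminormedAddCommGroup F] {s : Set E} {f : E → F} {K : NNReal} (hs : IsClosed s)
    (hf : LipschitzOnWith K f s) (hf₀ : ∀ x ∈ frontier s, f x = 0) :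
    LipschitzWith K (s.indicator f) := by
  have crossing {x y : E} (hx : x ∈ s) (hy : y ∉ s) :
      dist (s.indicator f x) (s.indicator f y) ≤ K * dist x y := by
    obtain ⟨z, hz, hzs⟩ := inter_frontier_nonempty_of_isPreconnected
      (convex_segment x y).isPreconnected ⟨x, left_mem_segment ℝ x y, hx⟩
      ⟨y, right_mem_segment ℝ x y, hy⟩
    calc dist (s.indicator f x) (s.indicator f y) = dist (f x) (f z) := by
          rw [indicator_of_mem hx, indicator_of_notMem hy, hf₀ z hzs]
      _ ≤ K * dist x z := hf.dist_le_mul x hx z (hs.frontier_subset hzs)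
      _ ≤ K * dist x y := by
          gcongr
          linarith [dist_add_dist_of_mem_segment hz, dist_nonneg (x := z) (y := y)]
  refine LipschitzWith.of_dist_le_mul fun x y ↦ ?_
  by_cases hx : x ∈ s <;> by_cases hy : y ∈ s
  · simpa only [indicator_of_mem, hx, hy] using hf.dist_le_mul x hx y hy
  · exact crossing hx hy
  · simpa only [dist_comm] using crossing hy hx
  · simp only [indicator_of_notMem, hx, hy, not_false_eq_true, dist_self]
    positivity

end ZeroExtension

section ConvexBody

variable {E : Type*} [NormedAddCommGroup E] [NormedSpace ℝ E] {s : Set E}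

theorem fderiv_indicator {f : E → ℝ} (hs : IsClosed s) {x : E} (hx : x ∉ frontier s) :
    fderiv ℝ (s.indicator f) x = s.indicator (fderivWithin ℝ f s) x := by
  by_cases hxs : x ∈ s
  · have hsx : s ∈ 𝓝 x := mem_interior_iff_mem_nhds.1 (by simpa [hs.frontier_eq, hxs] using hx)
    have hext : s.indicator f =ᶠ[𝓝 x] f :=
      eventually_of_mem hsx fun y hy ↦ indicator_of_mem hy f
    rw [indicator_of_mem hxs, fderivWithin_of_mem_nhds hsx, hext.fderiv_eq]
  · have hext : s.indicator f =ᶠ[𝓝 x] fun _ ↦ 0 :=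
      eventually_of_mem (hs.isOpen_compl.mem_nhds hxs) fun y hy ↦ indicator_of_notMem hy f
    rw [indicator_of_notMem hxs, hext.fderiv_eq, fderiv_fun_const, Pi.zero_apply]

theorem contDiffOn_partialDeriv {f : E → ℝ} {m n : WithTop ℕ∞} (hs : UniqueDiffOn ℝ s)
    (hf : ContDiffOn ℝ n f s) (hmn : m + 1 ≤ n) (v : E) :
    ContDiffOn ℝ m (fun x ↦ fderivWithin ℝ f s x v) s :=
  (hf.fderivWithin hs hmn).clm_apply contDiffOn_const

variable [MeasurableSpace E] [BorelSpace E] (μ : Measure E)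

theorem integrableOn_mul_partialDeriv [IsFiniteMeasureOnCompacts μ] (hs : UniqueDiffOn ℝ s)
    (hcomp : IsCompact s) {f g : E → ℝ} (hf : ContDiffOn ℝ 1 f s) (hg : ContDiffOn ℝ 1 g s)
    (v : E) : IntegrableOn (fun x ↦ f x * fderivWithin ℝ g s x v) s μ :=
  (hf.continuousOn.mul (contDiffOn_partialDeriv (m := 0) hs hg le_rfl v).continuousOn)
    |>.integrableOn_compact hcomp

variable [FiniteDimensional ℝ E] [μ.IsAddHaarMeasure]

-- The extension of `f` by zero is Lipschitz, so it can be integrated by parts against `1`.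
theorem setIntegral_fderivWithin_eq_zero (hconv : Convex ℝ s) (hcomp : IsCompact s) {f : E → ℝ}
    (hf : ContDiffOn ℝ 1 f s) (hf₀ : ∀ x ∈ frontier s, f x = 0) (v : E) :
    ∫ x in s, fderivWithin ℝ f s x v ∂μ = 0 := by
  obtain ⟨K, hK⟩ := hf.exists_lipschitzOnWith one_ne_zero hconv hcomp
  have hext := lipschitzWith_indicator hcomp.isClosed hK hf₀
  have hparts := (LipschitzWith.const (1 : ℝ)).integral_lineDeriv_mul_eq (μ := μ) hext
    (HasCompactSupport.intro hcomp fun x hx ↦ indicator_of_notMem hx f) (-v)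
  have hae : ∀ᵐ x ∂μ, x ∉ frontier s :=
    measure_eq_zero_iff_ae_notMem.1 (hconv.addHaar_frontier μ)
  calc ∫ x in s, fderivWithin ℝ f s x v ∂μ
      = ∫ x, s.indicator (fun y ↦ fderivWithin ℝ f s y v) x ∂μ :=
        (integral_indicator hcomp.measurableSet).symm
    _ = ∫ x, lineDeriv ℝ (s.indicator f) x v ∂μ := by
        refine integral_congr_ae ?_
        filter_upwards [hae, hext.ae_differentiableAt] with x hx hdiff
        rw [hdiff.lineDeriv_eq_fderiv, fderiv_indicator hcomp.isClosed hx]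
        exact congrFun (indicator_comp_of_zero (g := fun L : E →L[ℝ] ℝ ↦ L v) rfl) x
    _ = 0 := by simpa [lineDeriv] using hparts.symm

theorem setIntegral_mul_partialDeriv (hconv : Convex ℝ s) (hcomp : IsCompact s)
    (hne : (interior s).Nonempty) {f g : E → ℝ} (hf : ContDiffOn ℝ 1 f s)
    (hg : ContDiffOn ℝ 1 g s) (hf₀ : ∀ x ∈ frontier s, f x = 0) (v : E) :
    ∫ x in s, f x * fderivWithin ℝ g s x v ∂μ = -∫ x in s, g x * fderivWithin ℝ f s x v ∂μ := by
  have huniq := uniqueDiffOn_convex hconv hne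
  have hdiv := setIntegral_fderivWithin_eq_zero μ hconv hcomp (f := fun x ↦ f x * g x) (hf.mul hg)
    (fun x hx ↦ by rw [hf₀ x hx, zero_mul]) v
  rw [← add_eq_zero_iff_eq_neg, ← integral_add (integrableOn_mul_partialDeriv μ huniq hcomp hf hg v)
    (integrableOn_mul_partialDeriv μ huniq hcomp hg hf v), ← hdiv]
  refine setIntegral_congr_fun hcomp.measurableSet fun x hx ↦ ?_
  simp [fderivWithin_fun_mul (huniq x hx) (hf.differentiableOn one_ne_zero x hx)
    (hg.differentiableOn one_ne_zero x hx)]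

/-- The Dirichlet boundary conditions `f = 0`, `∇f = 0` on the boundary of `s`. -/
structure IsClampedOn (s : Set E) (f : E → ℝ) : Prop where
  eq_zero : ∀ x ∈ frontier s, f x = 0
  fderivWithin_eq_zero : ∀ x ∈ frontier s, fderivWithin ℝ f s x = 0

theorem IsClampedOn.setIntegral_mul_secondDeriv (hconv : Convex ℝ s) (hcomp : IsCompact s)
    (hne : (interior s).Nonempty) {f g : E → ℝ} (hf₀ : IsClampedOn s f) (hf : ContDiffOn ℝ 2 f s)
    (hg : ContDiffOn ℝ 2 g s) (v : E) :
    ∫ x in s, f x * fderivWithin ℝ (fun y ↦ fderivWithin ℝ g s y v) s x v ∂μ =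
      ∫ x in s, g x * fderivWithin ℝ (fun y ↦ fderivWithin ℝ f s y v) s x v ∂μ := by
  have huniq := uniqueDiffOn_convex hconv hne
  have hf' := contDiffOn_partialDeriv (m := 1) huniq hf le_rfl v
  have hg' := contDiffOn_partialDeriv (m := 1) huniq hg le_rfl v
  have hf'₀ : ∀ x ∈ frontier s, fderivWithin ℝ f s x v = 0 := fun x hx ↦ by
    rw [hf₀.fderivWithin_eq_zero x hx, zero_apply]
  have hf₁ := hf.of_le one_le_two
  have hg₁ := hg.of_le one_le_two
  rw [setIntegral_mul_partialDeriv μ hconv hcomp hne hf₁ hg' hf₀.eq_zero v, neg_eq_iff_eq_neg]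
  simpa only [mul_comm] using setIntegral_mul_partialDeriv μ hconv hcomp hne hf' hg₁ hf'₀ v

end ConvexBody

section Laplacian

variable {N : ℕ} {s : Set (EuclideanSpace ℝ (Fin N))} {f g : EuclideanSpace ℝ (Fin N) → ℝ}

/-- The Laplacian with all derivatives taken within `s`; unlike `lap`, it is meaningful up to the
boundary of a convex body `s` for functions which are only defined there. -/
noncomputable def lapWithin (s : Set (EuclideanSpace ℝ (Fin N)))
    (f : EuclideanSpace ℝ (Fin N) → ℝ) (x : EuclideanSpace ℝ (Fin N)) : ℝ :=
  ∑ i : Fin N, fderivWithin ℝ (fun y ↦ fderivWithin ℝ f s y (EuclideanSpace.single i 1)) s x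
    (EuclideanSpace.single i 1)

theorem lap_congr {x : EuclideanSpace ℝ (Fin N)} (h : f =ᶠ[𝓝 x] g) : lap f x = lap g x := by
  refine Finset.sum_congr rfl fun i _ ↦ ?_
  have hpartial : (fun y ↦ fderiv ℝ f y (EuclideanSpace.single i 1)) =ᶠ[𝓝 x]
      fun y ↦ fderiv ℝ g y (EuclideanSpace.single i 1) :=
    (h.fderiv (𝕜 := ℝ)).mono fun y hy ↦ congrArg (· (EuclideanSpace.single i 1)) hy
  rw [hpartial.fderiv_eq]

theorem lapWithin_eq_lap {x : EuclideanSpace ℝ (Fin N)} (hx : x ∈ interior s) :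
    lapWithin s f x = lap f x := by
  refine Finset.sum_congr rfl fun i _ ↦ ?_
  have hpartial : (fun y ↦ fderivWithin ℝ f s y (EuclideanSpace.single i 1)) =ᶠ[𝓝 x]
      fun y ↦ fderiv ℝ f y (EuclideanSpace.single i 1) := by
    filter_upwards [isOpen_interior.mem_nhds hx] with y hy
    rw [fderivWithin_of_mem_nhds (mem_interior_iff_mem_nhds.1 hy)]
  rw [fderivWithin_of_mem_nhds (mem_interior_iff_mem_nhds.1 hx), hpartial.fderiv_eq]

theorem lapWithin_lapWithin_eq_biharm {x : EuclideanSpace ℝ (Fin N)} (hx : x ∈ interior s) :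
    lapWithin s (lapWithin s f) x = biharm f x := by
  rw [lapWithin_eq_lap hx]
  exact lap_congr <| eventually_of_mem (isOpen_interior.mem_nhds hx) fun y ↦ lapWithin_eq_lap

theorem contDiffOn_lapWithin {m n : WithTop ℕ∞} (hs : UniqueDiffOn ℝ s) (hf : ContDiffOn ℝ n f s)
    (hmn : m + 1 + 1 ≤ n) : ContDiffOn ℝ m (lapWithin s f) s :=
  ContDiffOn.sum fun _ _ ↦ contDiffOn_partialDeriv hs (contDiffOn_partialDeriv hs hf hmn _) le_rfl _

theorem IsClampedOn.setIntegral_mul_lapWithin (hconv : Convex ℝ s) (hcomp : IsCompact s)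
    (hne : (interior s).Nonempty) (hf₀ : IsClampedOn s f) (hf : ContDiffOn ℝ 2 f s)
    (hg : ContDiffOn ℝ 2 g s) :
    ∫ x in s, f x * lapWithin s g x = ∫ x in s, g x * lapWithin s f x := by
  have huniq := uniqueDiffOn_convex hconv hne
  have integrable {a b : EuclideanSpace ℝ (Fin N) → ℝ} (ha : ContDiffOn ℝ 2 a s)
      (hb : ContDiffOn ℝ 2 b s) (v : EuclideanSpace ℝ (Fin N)) :
      IntegrableOn (fun x ↦ a x * fderivWithin ℝ (fun y ↦ fderivWithin ℝ b s y v) s x v) s :=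
    integrableOn_mul_partialDeriv volume huniq hcomp (ha.of_le one_le_two)
      (contDiffOn_partialDeriv huniq hb le_rfl v) v
  simp only [lapWithin, Finset.mul_sum]
  rw [integral_finsetSum _ fun i _ ↦ integrable hf hg _,
    integral_finsetSum _ fun i _ ↦ integrable hg hf _]
  exact Finset.sum_congr rfl fun i _ ↦
    hf₀.setIntegral_mul_secondDeriv volume hconv hcomp hne hf hg _

theorem setIntegral_mul_lapWithin_lapWithin (hconv : Convex ℝ s) (hcomp : IsCompact s)
    (hne : (interior s).Nonempty) (hf₀ : IsClampedOn s f) (hg₀ : IsClampedOn s g)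
    (hf : ContDiffOn ℝ 4 f s) (hg : ContDiffOn ℝ 4 g s) :
    ∫ x in s, f x * lapWithin s (lapWithin s g) x =
      ∫ x in s, g x * lapWithin s (lapWithin s f) x := by
  have huniq := uniqueDiffOn_convex hconv hne
  have two_le_four : (2 : WithTop ℕ∞) ≤ 4 := by norm_num
  have hlap {h : EuclideanSpace ℝ (Fin N) → ℝ} (hh : ContDiffOn ℝ 4 h s) :
      ContDiffOn ℝ 2 (lapWithin s h) s :=
    contDiffOn_lapWithin huniq hh (by norm_num)
  calc ∫ x in s, f x * lapWithin s (lapWithin s g) x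
      = ∫ x in s, lapWithin s g x * lapWithin s f x :=
        hf₀.setIntegral_mul_lapWithin hconv hcomp hne (hf.of_le two_le_four) (hlap hg)
    _ = ∫ x in s, lapWithin s f x * lapWithin s g x := by simp only [mul_comm]
    _ = ∫ x in s, g x * lapWithin s (lapWithin s f) x :=
        (hg₀.setIntegral_mul_lapWithin hconv hcomp hne (hg.of_le two_le_four) (hlap hf)).symm

end Laplacian

section UnitBall

variable {N : ℕ}

theorem fderivWithin_closedBall_apply_of_orthogonal {E : Type*} [NormedAddCommGroup E]
    [InnerProductSpace ℝ E] {u : E → ℝ} {x τ : E}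
    (hu : DifferentiableWithinAt ℝ u (closedBall 0 1) x) (hu₀ : ∀ y, ‖y‖ = 1 → u y = 0)
    (hx : ‖x‖ = 1) (hτ : ‖τ‖ = 1) (horth : inner ℝ x τ = 0) :
    fderivWithin ℝ u (closedBall 0 1) x τ = 0 := by
  let γ : ℝ → E := fun t ↦ Real.cos t • x + Real.sin t • τ
  have hγ₀ : γ 0 = x := by simp [γ]
  have hγ : ∀ t, ‖γ t‖ = 1 := fun t ↦ by
    have hsq : ‖γ t‖ ^ 2 = 1 := by
      simp [γ, norm_add_sq_real, norm_smul, hx, hτ, inner_smul_left, inner_smul_right, horth]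
    nlinarith [norm_nonneg (γ t)]
  have hγ' : HasDerivAt γ τ 0 := by
    simpa using
      ((Real.hasDerivAt_cos 0).smul_const x).fun_add ((Real.hasDerivAt_sin 0).smul_const τ)
  have hu' : HasFDerivWithinAt u (fderivWithin ℝ u (closedBall 0 1) x) (closedBall 0 1) (γ 0) := by
    rw [hγ₀]
    exact hu.hasFDerivWithinAt
  have hcomp : HasDerivAt (u ∘ γ) (fderivWithin ℝ u (closedBall 0 1) x τ) 0 :=
    hu'.comp_hasDerivAt 0 hγ' (.of_forall fun t ↦ by simp [hγ t])
  have hconst : u ∘ γ = fun _ ↦ 0 := funext fun t ↦ hu₀ _ (hγ t)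
  exact hcomp.unique (hconst ▸ hasDerivAt_const 0 0)

theorem norm_eq_one_of_mem_frontier {E : Type*} [NormedAddCommGroup E] [NormedSpace ℝ E] {x : E}
    (hx : x ∈ frontier (closedBall 0 1)) : ‖x‖ = 1 := by
  simpa [frontier_closedBall (0 : E) one_ne_zero] using hx

theorem isClampedOn_closedBall {E : Type*} [NormedAddCommGroup E] [InnerProductSpace ℝ E]
    {u : E → ℝ} (hu : DifferentiableOn ℝ u (closedBall 0 1)) (hu₀ : ∀ x, ‖x‖ = 1 → u x = 0)
    (hu' : ∀ x, ‖x‖ = 1 → fderivWithin ℝ u (closedBall 0 1) x x = 0) :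
    IsClampedOn (closedBall 0 1) u := by
  refine ⟨fun x hx ↦ hu₀ x (norm_eq_one_of_mem_frontier hx),
    fun x hx ↦ ContinuousLinearMap.ext fun w ↦ ?_⟩
  have hx₁ := norm_eq_one_of_mem_frontier hx
  set D := fderivWithin ℝ u (closedBall 0 1) x
  set τ := w - inner ℝ x w • x with hτ_def
  have hw : w = inner ℝ x w • x + ‖τ‖ • (‖τ‖⁻¹ • τ) := by
    rcases eq_or_ne τ 0 with hτ | hτ
    · simpa [hτ] using sub_eq_zero.1 hτ
    · rw [smul_inv_smul₀ (norm_ne_zero_iff.2 hτ), add_sub_cancel]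
  have tangential : ‖τ‖ • D (‖τ‖⁻¹ • τ) = 0 := by
    rcases eq_or_ne τ 0 with hτ | hτ
    · simp [hτ]
    · have hunit : ‖‖τ‖⁻¹ • τ‖ = 1 := by
        rw [norm_smul, norm_inv, norm_norm, inv_mul_cancel₀ (norm_ne_zero_iff.2 hτ)]
      have horth : inner ℝ x (‖τ‖⁻¹ • τ) = 0 := by
        simp [hτ_def, inner_smul_right, inner_sub_right, hx₁]
      rw [fderivWithin_closedBall_apply_of_orthogonal (hu x (by simp [hx₁])) hu₀ hx₁ hunit horth,
        smul_zero]
  rw [hw, map_add, map_smul, map_smul, hu' x hx₁, tangential, smul_zero, add_zero, zero_apply]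

theorem IsClassicalSolution.isClampedOn {lam : ℝ} {u : EuclideanSpace ℝ (Fin N) → ℝ}
    (hu : IsClassicalSolution N lam u) : IsClampedOn (closedBall 0 1) u :=
  isClampedOn_closedBall (hu.contDiffOn.differentiableOn (by norm_num)) hu.bdry hu.bdry_deriv

theorem setIntegral_ball_eq_closedBall (f : EuclideanSpace ℝ (Fin N) → ℝ) :
    ∫ x in ball 0 1, f x = ∫ x in closedBall 0 1, f x := by
  rw [← interior_closedBall (0 : EuclideanSpace ℝ (Fin N)) one_ne_zero]
  exact setIntegral_congr_set <| interior_ae_eq_of_null_frontier <|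
    (convex_closedBall 0 1).addHaar_frontier volume

theorem nonempty_interior_closedBall {E : Type*} [NormedAddCommGroup E] [NormedSpace ℝ E] :
    (interior (closedBall (0 : E) 1)).Nonempty := by
  simp [interior_closedBall (0 : E) one_ne_zero]

variable {f g : EuclideanSpace ℝ (Fin N) → ℝ}

theorem mul_lapWithin_lapWithin_eqOn_mul_biharm :
    EqOn (fun x ↦ f x * lapWithin (closedBall 0 1) (lapWithin (closedBall 0 1) g) x)
      (fun x ↦ f x * biharm g x) (ball 0 1) := fun x hx ↦ by
  rw [← interior_closedBall (0 : EuclideanSpace ℝ (Fin N)) one_ne_zero] at hx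
  simp only [lapWithin_lapWithin_eq_biharm hx]

theorem integrableOn_mul_biharm (hf : ContinuousOn f (closedBall 0 1))
    (hg : ContDiffOn ℝ 4 g (closedBall 0 1)) :
    IntegrableOn (fun x ↦ f x * biharm g x) (ball 0 1) := by
  have huniq := uniqueDiffOn_convex (convex_closedBall (0 : EuclideanSpace ℝ (Fin N)) 1)
    nonempty_interior_closedBall
  have hcont := hf.mul <| ContDiffOn.continuousOn (𝕜 := ℝ) (n := 0) <|
    contDiffOn_lapWithin huniq (contDiffOn_lapWithin (m := 2) huniq hg (by norm_num)) (by norm_num)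
  exact ((hcont.integrableOn_compact (isCompact_closedBall 0 1)).mono_set
    ball_subset_closedBall).congr_fun mul_lapWithin_lapWithin_eqOn_mul_biharm measurableSet_ball

theorem setIntegral_mul_biharm_comm (hf : ContDiffOn ℝ 4 f (closedBall 0 1))
    (hg : ContDiffOn ℝ 4 g (closedBall 0 1)) (hf₀ : IsClampedOn (closedBall 0 1) f)
    (hg₀ : IsClampedOn (closedBall 0 1) g) :
    ∫ x in ball 0 1, f x * biharm g x = ∫ x in ball 0 1, g x * biharm f x := by
  have on_closedBall (a b : EuclideanSpace ℝ (Fin N) → ℝ) : ∫ x in ball 0 1, a x * biharm b x =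
      ∫ x in closedBall 0 1, a x * lapWithin (closedBall 0 1) (lapWithin (closedBall 0 1) b) x := by
    rw [← setIntegral_ball_eq_closedBall,
      setIntegral_congr_fun measurableSet_ball mul_lapWithin_lapWithin_eqOn_mul_biharm]
  rw [on_closedBall f g, on_closedBall g f]
  exact setIntegral_mul_lapWithin_lapWithin (convex_closedBall 0 1) (isCompact_closedBall 0 1)
    nonempty_interior_closedBall hf₀ hg₀ hf hg

theorem IsClampedOn.setIntegral_lap_eq_zero (hf : ContDiffOn ℝ 2 f (closedBall 0 1))
    (hf₀ : IsClampedOn (closedBall 0 1) f) : ∫ x in ball 0 1, lap f x = 0 := by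
  have hball {x : EuclideanSpace ℝ (Fin N)} (hx : x ∈ ball 0 1) :
      lapWithin (closedBall 0 1) f x = lap f x :=
    lapWithin_eq_lap (by rwa [interior_closedBall _ one_ne_zero])
  have hsymm := hf₀.setIntegral_mul_lapWithin (g := fun _ ↦ 1) (convex_closedBall 0 1)
    (isCompact_closedBall 0 1) nonempty_interior_closedBall hf contDiffOn_const
  calc ∫ x in ball 0 1, lap f x = ∫ x in ball 0 1, lapWithin (closedBall 0 1) f x :=
        setIntegral_congr_fun measurableSet_ball fun x hx ↦ (hball hx).symm
    _ = ∫ x in closedBall 0 1, 1 * lapWithin (closedBall 0 1) f x := by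
        simp only [setIntegral_ball_eq_closedBall, one_mul]
    _ = 0 := by rw [← hsymm]; simp [lapWithin]

end UnitBall

section TestPair

theorem three_mul_sq_sub_le_inv_sq {s t : ℝ} (hs : 0 ≤ s) (ht : 0 < t) :
    3 * s ^ 2 - 2 * s ^ 3 * t ≤ 1 / t ^ 2 := by
  have hfactor : 1 - (3 * s ^ 2 - 2 * s ^ 3 * t) * t ^ 2 = (1 - s * t) ^ 2 * (1 + 2 * (s * t)) := by
    ring
  rw [le_div_iff₀ (by positivity), ← sub_nonneg, hfactor]
  positivity

theorem IsClassicalSolution.le_of_test_pair {N : ℕ} {lam Λ : ℝ}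
    {u φ s : EuclideanSpace ℝ (Fin N) → ℝ} (hu : IsClassicalSolution N lam u) (hlam : 0 < lam)
    (hφ : ContDiffOn ℝ 4 φ (closedBall 0 1)) (hφ₀ : IsClampedOn (closedBall 0 1) φ)
    (hφ_nonneg : ∀ x ∈ ball 0 1, 0 ≤ φ x) (hs_nonneg : ∀ x ∈ ball 0 1, 0 ≤ s x)
    (hle : ∀ x ∈ ball 0 1, biharm φ x ≤ 2 * Λ * φ x * s x ^ 3)
    (hpos : 0 < ∫ x in ball 0 1, φ x * (3 * s x ^ 2 - 2 * s x ^ 3)) : lam ≤ Λ := by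
  by_contra! hΛ
  have pointwise : ∀ x ∈ ball 0 1, lam * (φ x * (3 * s x ^ 2 - 2 * s x ^ 3)) ≤
      φ x * biharm u x - u x * biharm φ x := fun x hx ↦ by
    have hux := hu.pos x hx
    have hφx := hφ_nonneg x hx
    have hsx := hs_nonneg x hx
    calc lam * (φ x * (3 * s x ^ 2 - 2 * s x ^ 3))
        ≤ lam * (φ x * (3 * s x ^ 2 - 2 * s x ^ 3)) + 2 * (lam - Λ) * (φ x * s x ^ 3 * u x) := by
          have := sub_pos.2 hΛ
          exact le_add_of_nonneg_right (by positivity)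
      _ = φ x * (lam * (3 * s x ^ 2 - 2 * s x ^ 3 * (1 - u x)))
            - u x * (2 * Λ * φ x * s x ^ 3) := by ring
      _ ≤ φ x * (lam * (1 / (1 - u x) ^ 2)) - u x * biharm φ x := by
          gcongr
          · exact three_mul_sq_sub_le_inv_sq hsx (sub_pos.2 (hu.lt_one x hx))
          · exact hle x hx
      _ = φ x * biharm u x - u x * biharm φ x := by rw [hu.eqn x hx, mul_one_div]
  have hφu := integrableOn_mul_biharm hφ.continuousOn hu.contDiffOn
  have huφ := integrableOn_mul_biharm hu.contDiffOn.continuousOn hφ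
  have hint : IntegrableOn (fun x ↦ φ x * (3 * s x ^ 2 - 2 * s x ^ 3)) (ball 0 1) :=
    not_imp_comm.1 integral_undef hpos.ne'
  have integrated := setIntegral_mono_on (hint.const_mul lam) (hφu.sub huφ) measurableSet_ball
    pointwise
  have green := setIntegral_mul_biharm_comm hφ hu.contDiffOn hφ₀ hu.isClampedOn
  simp only [Pi.sub_apply] at integrated
  rw [integral_const_mul, integral_sub hφu huφ, green, sub_self] at integrated
  exact (mul_pos hlam hpos).not_ge integrated

end TestPair

section RadialPolynomial

open Polynomial

/-- The radial function `x ↦ p (1 - ‖x‖ ^ 2)`. The variable `1 - ‖x‖ ^ 2` vanishes on the unit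
sphere, so that boundary conditions become divisibility by powers of `X`. -/
noncomputable def radialEval {E : Type*} [Norm E] (p : ℝ[X]) (x : E) : ℝ :=
  p.eval (1 - ‖x‖ ^ 2)

/-- The Laplacian of `ℝ^N` acting on radial functions, in the variable `1 - ‖x‖ ^ 2` of
`radialEval`. -/
noncomputable def radialLap (N : ℕ) (p : ℝ[X]) : ℝ[X] :=
  4 * (1 - X) * derivative (derivative p) - 2 * (N : ℝ[X]) * derivative p

variable {E : Type*} [NormedAddCommGroup E] [InnerProductSpace ℝ E] {N : ℕ}

theorem hasFDerivAt_radialEval (p : ℝ[X]) (x : E) :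
    HasFDerivAt (radialEval p) ((-2 * radialEval (derivative p) x) • innerSL ℝ x) x := by
  have hcomp := (p.hasDerivAt _).comp_hasFDerivAt x
    ((hasStrictFDerivAt_norm_sq x).hasFDerivAt.const_sub 1)
  have hlinear : (-2 * radialEval (derivative p) x) • innerSL ℝ x =
      eval (1 - ‖x‖ ^ 2) (derivative p) • -(2 • innerSL ℝ) x := by
    ext v
    simp only [radialEval, neg_mul, neg_smul, neg_apply, smul_apply, coe_innerSL_apply, smul_eq_mul,
      smul_neg, nsmul_eq_mul, Nat.cast_ofNat, neg_inj]
    ring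
  rw [hlinear]
  exact hcomp

theorem contDiff_radialEval (p : ℝ[X]) {n : WithTop ℕ∞} :
    ContDiff ℝ n (radialEval p : E → ℝ) := by
  have haeval := p.contDiff_aeval (𝕜 := ℝ) n
  simp only [coe_aeval_eq_eval] at haeval
  exact haeval.comp (contDiff_const.sub (contDiff_norm_sq ℝ))

theorem isClampedOn_radialEval {p : ℝ[X]} (hp : X ^ 2 ∣ p) :
    IsClampedOn (closedBall (0 : E) 1) (radialEval p) := by
  obtain ⟨r, rfl⟩ := hp
  refine ⟨fun x hx ↦ by simp [radialEval, norm_eq_one_of_mem_frontier hx], fun x hx ↦ ?_⟩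
  have hderiv := (hasFDerivAt_radialEval (X ^ 2 * r) x).hasFDerivWithinAt.fderivWithin <|
    uniqueDiffOn_convex (convex_closedBall 0 1) nonempty_interior_closedBall x
      (isClosed_closedBall.frontier_subset hx)
  rw [hderiv]
  simp [radialEval, norm_eq_one_of_mem_frontier hx]

theorem radialLap_X_pow_add_two (k : ℕ) : radialLap N (X ^ (k + 2)) =
    (4 * (k + 2) * (k + 1) : ℝ) • X ^ k - (2 * (k + 2) * (2 * (k + 1) + N) : ℝ) • X ^ (k + 1) :=
  Polynomial.funext fun y ↦ by
    simp only [radialLap, derivative_X_pow_succ, derivative_mul, derivative_natCast,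
      derivative_one, map_add, map_natCast, map_one, Nat.cast_add, Nat.cast_one, add_zero, zero_mul,
      zero_add, eval_sub, eval_add, eval_mul, eval_pow, eval_smul, eval_X, eval_one, eval_ofNat,
      eval_natCast, smul_eq_mul]
    ring

theorem lap_radialEval (p : ℝ[X]) :
    lap (radialEval p : EuclideanSpace ℝ (Fin N) → ℝ) = radialEval (radialLap N p) := by
  funext x
  have first (i : Fin N) : (fun y ↦ fderiv ℝ (radialEval p) y (EuclideanSpace.single i 1)) =
      fun y ↦ -2 * radialEval (derivative p) y * y i := by
    funext y
    simp [(hasFDerivAt_radialEval p y).fderiv, EuclideanSpace.inner_single_right]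
  have second (i : Fin N) : fderiv ℝ (fun y ↦ -2 * radialEval (derivative p) y * y i) x
      (EuclideanSpace.single i 1) =
        4 * radialEval (derivative (derivative p)) x * x i ^ 2 -
          2 * radialEval (derivative p) x := by
    have hcoord : HasFDerivAt (fun y : EuclideanSpace ℝ (Fin N) ↦ y i)
        (EuclideanSpace.proj i : EuclideanSpace ℝ (Fin N) →L[ℝ] ℝ) x :=
      (EuclideanSpace.proj i : EuclideanSpace ℝ (Fin N) →L[ℝ] ℝ).hasFDerivAt
    rw [(((hasFDerivAt_radialEval (derivative p) x).const_mul (-2)).fun_mul hcoord).fderiv]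
    simp only [neg_mul, neg_smul, smul_neg, neg_neg, add_apply, neg_apply, smul_apply,
      PiLp.proj_apply, PiLp.single_eq_same, smul_eq_mul, mul_one, one_mul, coe_innerSL_apply,
      EuclideanSpace.inner_single_right, Real.ringHom_apply]
    ring
  simp only [lap, first, second, Finset.sum_sub_distrib, ← Finset.mul_sum,
    ← EuclideanSpace.real_norm_sq_eq]
  simp only [radialEval, radialLap, Finset.sum_const, Finset.card_univ, Fintype.card_fin,
    nsmul_eq_mul, eval_sub, eval_mul, eval_ofNat, eval_one, eval_X, sub_sub_cancel, eval_natCast]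
  ring

theorem biharm_radialEval (p : ℝ[X]) :
    biharm (radialEval p : EuclideanSpace ℝ (Fin N) → ℝ) =
      radialEval (radialLap N (radialLap N p)) := by
  funext x
  rw [biharm, lap_radialEval, lap_radialEval]

/-- The mean value of `(1 - ‖x‖ ^ 2) ^ k` over the unit ball of `ℝ^N`, encoded by its recursion in
`k`. -/
noncomputable def ballMoment (N : ℕ) : ℕ → ℝ
  | 0 => 1
  | k + 1 => (k + 1) / (k + 1 + N / 2) * ballMoment N k

/-- The mean value of `radialEval p` over the unit ball of `ℝ^N`, as the linear extension of
`ballMoment`. -/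
noncomputable def ballMean (N : ℕ) : ℝ[X] →ₗ[ℝ] ℝ :=
  lsum fun k ↦ ballMoment N k • LinearMap.id

theorem ballMean_X_pow (N k : ℕ) : ballMean N (X ^ k) = ballMoment N k := by
  simp [ballMean, lsum_apply, ← monomial_one_right_eq_X_pow, sum_monomial_index]

theorem integrableOn_radialEval (p : ℝ[X]) :
    IntegrableOn (radialEval p) (ball (0 : EuclideanSpace ℝ (Fin N)) 1) :=
  ((contDiff_radialEval (n := 0) p).continuous.continuousOn.integrableOn_compact
    (isCompact_closedBall 0 1)).mono_set ball_subset_closedBall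

-- The recursion expresses that the Laplacian of the clamped function `(1 - ‖x‖ ^ 2) ^ (k + 2)`
-- has mean value zero.
theorem setIntegral_radialEval_X_pow (k : ℕ) :
    ∫ x in ball (0 : EuclideanSpace ℝ (Fin N)) 1, radialEval (X ^ k) x =
      ballMoment N k * volume.real (ball (0 : EuclideanSpace ℝ (Fin N)) 1) := by
  induction k with
  | zero => simp [radialEval, ballMoment]
  | succ k ih =>
    have hzero := (isClampedOn_radialEval (pow_dvd_pow X (Nat.le_add_left 2 k)))
      |>.setIntegral_lap_eq_zero (N := N) (contDiff_radialEval _).contDiffOn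
    have hrec : (4 * (k + 2) * (k + 1) : ℝ) *
          ∫ x in ball (0 : EuclideanSpace ℝ (Fin N)) 1, radialEval (X ^ k) x =
        (2 * (k + 2) * (2 * (k + 1) + N) : ℝ) *
          ∫ x in ball (0 : EuclideanSpace ℝ (Fin N)) 1, radialEval (X ^ (k + 1)) x := by
      rw [← sub_eq_zero, ← integral_const_mul, ← integral_const_mul,
        ← integral_sub ((integrableOn_radialEval _).const_mul _)
          ((integrableOn_radialEval _).const_mul _), ← hzero, lap_radialEval,
        radialLap_X_pow_add_two]
      simp [radialEval]
    rw [ih] at hrec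
    rw [ballMoment]
    field_simp
    refine mul_left_cancel₀ (by positivity : (2 * (k + 2) : ℝ) ≠ 0) ?_
    linear_combination -hrec

theorem setIntegral_radialEval (p : ℝ[X]) :
    ∫ x in ball (0 : EuclideanSpace ℝ (Fin N)) 1, radialEval p x =
      ballMean N p * volume.real (ball (0 : EuclideanSpace ℝ (Fin N)) 1) := by
  induction p using Polynomial.induction_on' with
  | add p q hp hq =>
    simp only [radialEval, eval_add, map_add, add_mul] at *
    rw [← hp, ← hq]
    exact integral_add (integrableOn_radialEval p) (integrableOn_radialEval q)
  | monomial k c =>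
    rw [← smul_X_eq_monomial, map_smul, ballMean_X_pow, smul_eq_mul, mul_assoc,
      ← setIntegral_radialEval_X_pow, ← integral_const_mul]
    simp [radialEval]

theorem le_of_radial_test_pair {lam Λ : ℝ} (hlam : lam ∈ solSet N) {p σ : ℝ[X]} (hp : X ^ 2 ∣ p)
    (hp_nonneg : ∀ y ∈ Ioc (0 : ℝ) 1, 0 ≤ p.eval y) (hσ_nonneg : ∀ y ∈ Ioc (0 : ℝ) 1, 0 ≤ σ.eval y)
    (hle : ∀ y ∈ Ioc (0 : ℝ) 1,
      (radialLap N (radialLap N p)).eval y ≤ 2 * Λ * p.eval y * σ.eval y ^ 3)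
    (hpos : 0 < ballMean N (p * (3 * σ ^ 2 - 2 * σ ^ 3))) : lam ≤ Λ := by
  obtain ⟨hlam_pos, u, hu⟩ := hlam
  have bump_mem {x : EuclideanSpace ℝ (Fin N)} (hx : x ∈ ball 0 1) : 1 - ‖x‖ ^ 2 ∈ Ioc 0 1 := by
    rw [mem_ball_zero_iff] at hx
    constructor <;> nlinarith [norm_nonneg x]
  refine hu.le_of_test_pair (φ := radialEval p) (s := radialEval σ) hlam_pos
    (contDiff_radialEval p).contDiffOn (isClampedOn_radialEval hp)
    (fun x hx ↦ hp_nonneg _ (bump_mem hx)) (fun x hx ↦ hσ_nonneg _ (bump_mem hx))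
    (fun x hx ↦ ?_) ?_
  · rw [biharm_radialEval]
    exact hle _ (bump_mem hx)
  · have hvol : 0 < volume.real (ball (0 : EuclideanSpace ℝ (Fin N)) 1) :=
      ENNReal.toReal_pos (measure_ball_pos volume 0 one_pos).ne' measure_ball_lt_top.ne
    have hmean := setIntegral_radialEval (N := N) (p * (3 * σ ^ 2 - 2 * σ ^ 3)) ▸ mul_pos hpos hvol
    simpa [radialEval] using hmean

end RadialPolynomial

section DimensionNine

open Polynomial

theorem exists_moebius_of_mem_Ioc {a b y : ℝ} (hy : y ∈ Ioc a b) :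
    ∃ w : ℝ, 0 ≤ w ∧ (a * w + b) / (w + 1) = y := by
  have hya := sub_pos.2 hy.1
  refine ⟨(b - y) / (y - a), div_nonneg (sub_nonneg.2 hy.2) hya.le, ?_⟩
  have hw : 0 < (b - y) / (y - a) + 1 :=
    add_pos_of_nonneg_of_pos (div_nonneg (sub_nonneg.2 hy.2) hya.le) one_pos
  rw [div_eq_iff hw.ne']
  field_simp
  ring

/-- The test function `φ` in dimension nine, as a polynomial in `1 - ‖x‖ ^ 2`. Its coefficients come
from a numerical linear program, rounded to integers. -/
noncomputable def profileNine : ℝ[X] :=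
  9 * X ^ 2 + 12 * X ^ 3 + 13 * X ^ 4 + 17 * X ^ 5 + 38 * X ^ 7 + 30 * X ^ 11

/-- The function `s` at which the tangent line of `t⁻²` is taken in dimension nine, as a polynomial
in `1 - ‖x‖ ^ 2`. Like `profileNine` it was found numerically. -/
noncomputable def weightNine : ℝ[X] :=
  (1 / 25 : ℝ) • (27 - 30 * X + 79 * X ^ 2)

theorem X_sq_dvd_profileNine : X ^ 2 ∣ profileNine :=
  ⟨9 + 12 * X + 13 * X ^ 2 + 17 * X ^ 3 + 38 * X ^ 5 + 30 * X ^ 9, by rw [profileNine]; ring⟩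

theorem eval_profileNine_nonneg {y : ℝ} (hy : 0 ≤ y) : 0 ≤ profileNine.eval y := by
  simp only [profileNine, eval_add, eval_mul, eval_ofNat, eval_pow, eval_X]
  positivity

theorem eval_weightNine_nonneg (y : ℝ) : 0 ≤ weightNine.eval y := by
  simp only [weightNine, eval_smul, eval_add, eval_sub, eval_mul, eval_ofNat, eval_X, eval_pow,
    smul_eq_mul]
  nlinarith [sq_nonneg (79 * y - 15)]

theorem eval_radialLap_radialLap_profileNine (y : ℝ) :
    (radialLap 9 (radialLap 9 profileNine)).eval y = -552 + 8928 * y - 123120 * y ^ 2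
      + 857520 * y ^ 3 - 2425920 * y ^ 4 + 2547216 * y ^ 5 + 3801600 * y ^ 7 - 12830400 * y ^ 8
      + 10335600 * y ^ 9 := by
  simp only [radialLap, profileNine, derivative_sub, derivative_neg, derivative_mul,
    derivative_X_pow_succ, derivative_X, derivative_C, derivative_ofNat, derivative_one, map_add,
    map_one, Nat.cast_one, Nat.cast_ofNat, pow_one, zero_add, add_zero, zero_sub, zero_mul,
    mul_zero, mul_one, neg_mul, mul_neg, eval_add, eval_sub, eval_neg, eval_mul, eval_pow,
    eval_X, eval_C, eval_one, eval_ofNat]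
  ring

theorem radialLap_radialLap_profileNine_le {y : ℝ} (hy : y ∈ Ioc (0 : ℝ) 1) :
    (radialLap 9 (radialLap 9 profileNine)).eval y ≤
      2 * 366 * profileNine.eval y * weightNine.eval y ^ 3 := by
  rw [eval_radialLap_radialLap_profileNine]
  simp only [profileNine, weightNine, eval_smul, eval_add, eval_sub, eval_mul, eval_ofNat, eval_X,
    eval_pow, smul_eq_mul]
  -- On each of these intervals the difference of the two sides, as a function of `w`, is a quotient
  -- of polynomials with nonnegative coefficients.
  have hcover : y ∈ Ioc 0 (3 / 10) ∨ y ∈ Ioc (3 / 10) (3 / 5) ∨ y ∈ Ioc (3 / 5) (4 / 5) ∨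
      y ∈ Ioc (4 / 5) 1 := by
    simp only [mem_Ioc] at hy ⊢
    grind only
  rcases hcover with h | h | h | h
  all_goals
    obtain ⟨w, hw, rfl⟩ := exists_moebius_of_mem_Ioc h
    field_simp
    rw [← sub_nonneg]
    ring_nf
    positivity

theorem ballMean_profileNine_pos :
    0 < ballMean 9 (profileNine * (3 * weightNine ^ 2 - 2 * weightNine ^ 3)) := by
  have hexpand : profileNine * (3 * weightNine ^ 2 - 2 * weightNine ^ 3) = (1 / 15625 : ℝ) • (
      (137781 : ℝ) • X ^ 2 + (271188 : ℝ) • X ^ 3 - (619407 : ℝ) • X ^ 4 + (3337281 : ℝ) • X ^ 5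
        - (4314951 : ℝ) • X ^ 6 + (3354066 : ℝ) • X ^ 7 + (299307 : ℝ) • X ^ 8
        - (17659683 : ℝ) • X ^ 9 + (24000886 : ℝ) • X ^ 10 - (53147602 : ℝ) • X ^ 11
        + (42980040 : ℝ) • X ^ 12 - (40587844 : ℝ) • X ^ 13 + (13991400 : ℝ) • X ^ 14
        - (29087010 : ℝ) • X ^ 15 + (33701400 : ℝ) • X ^ 16 - (29582340 : ℝ) • X ^ 17) :=
    Polynomial.funext fun y ↦ by
      simp only [profileNine, weightNine, eval_smul, eval_add, eval_sub, eval_mul, eval_ofNat,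
        eval_X, eval_pow, smul_eq_mul]
      ring
  rw [hexpand]
  simp only [map_add, map_sub, map_smul, ballMean_X_pow, ballMoment]
  norm_num

end DimensionNine

/-- in dimension N = 9, the pull-in voltage satisfies λ* ≤ 366. -/
theorem pullIn_le_of_dim_nine :
    ∀ lam ∈ solSet 9, lam ≤ 366 := fun _ hlam ↦
  le_of_radial_test_pair hlam X_sq_dvd_profileNine (fun _ hy ↦ eval_profileNine_nonneg hy.1.le)
    (fun y _ ↦ eval_weightNine_nonneg y) (fun _ ↦ radialLap_radialLap_profileNine_le)
    ballMean_profileNine_pos
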